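/- (Lemma 3.5, parts 1 and 2: monotone escape function.) Let χ ∈ C^∞([0,∞);[0,1]) satisfy χ(τ) = 1 for τ ≤ 1, χ(τ) = 0 for τ ≥ 2, and χ' ≤ 0. Let K ⊆ U be compact and let (r(t),θ(t),ρ(t),ω(t)), t ≤ 0, be a solution of the Hamiltonian system with θ(t) ∈ K, |ρ(t)| ≤ C₀, |ω(t)| ≤ C₀, r(t) ≥ c₀|t+T₀| for all t ≤ 0, and dist(θ(t), ℝ^{n-1}∖U) ≥ ε₀ > 0. For δ₀, C > 0 and T₀ < 0 define φ(t,r,θ,ρ,ω) := χ(|r−r(t)|/(5δ₀|t+T₀|)) · χ(|θ−θ(t)|/(δ₀−C|t+T₀|^{-μ})) · χ(|ρ−ρ(t)|/(δ₀−C|t+T₀|^{-1-μ})) · χ(|ω−ω(t)|/(δ₀−C|t+T₀|^{-μ})). Then there exist δ' > 0 and C > 0 such that for every δ₀ ∈ (δ'/2, δ') there is T₀ < 0 sufficiently negative for which: (i) φ is well defined and nonnegative on (−∞,0]×(1,∞)×U×ℝ×ℝ^{n-1}, with φ(t,r(t),θ(t),ρ(t),ω(t)) = 1 for all t ≤ 0;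 and (ii) the Lagrange derivative satisfies (∂_t + (∂p/∂ρ)∂_r + (∂p/∂ω)·∂_θ − (∂p/∂r)∂_ρ − (∂p/∂θ)·∂_ω)φ ≤ 0 everywhere on (−∞,0]×(1,∞)×U×ℝ×ℝ^{n-1}. -/

import Mathlib

open Real Set Filter Topology

namespace Scattering

/-- The Euclidean norm of a vector in `Fin m → ℝ`. -/
noncomputable def eNorm {m : ℕ} (v : Fin m → ℝ) : ℝ := Real.sqrt (∑ j, v j ^ 2)

/-- Partial derivative in the radial variable of a function of `(r, θ)`. -/
noncomputable def pderivR {m : ℕ} (f : ℝ → (Fin m → ℝ) → ℝ) : ℝ → (Fin m → ℝ) → ℝ :=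
  fun r θ => deriv (fun s => f s θ) r

/-- Partial derivative in the `j`-th angular variable of a function of `(r, θ)`. -/
noncomputable def pderivTheta {m : ℕ} (j : Fin m) (f : ℝ → (Fin m → ℝ) → ℝ) :
    ℝ → (Fin m → ℝ) → ℝ :=
  fun r θ => fderiv ℝ (f r) θ (Pi.single j 1)

/-- Iterated angular derivatives `∂_θ^α` for a multi-index `α` (a list of directions). -/
noncomputable def thetaDerivs {m : ℕ} (α : List (Fin m)) (f : ℝ → (Fin m → ℝ) → ℝ) :
    ℝ → (Fin m → ℝ) → ℝ :=
  α.foldr pderivTheta f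

/-- `DecayOn f ν S K` : for all `k, α` there is `C > 0` with
`|∂_r^k ∂_θ^α f(r,θ)| ≤ C r^{-ν-k}` for `r ∈ (S,∞)`, `θ ∈ K`. -/
def DecayOn {m : ℕ} (f : ℝ → (Fin m → ℝ) → ℝ) (ν S : ℝ) (K : Set (Fin m → ℝ)) : Prop :=
  ∀ (k : ℕ) (α : List (Fin m)), ∃ C > 0, ∀ r ∈ Ioi S, ∀ θ ∈ K,
    |(pderivR (m := m))^[k] (thetaDerivs α f) r θ| ≤ C * r ^ (-ν - (k : ℝ))

/-- The classical kinetic energy function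
`p(r,θ,ρ,ω) = ρ² + r⁻²Σ h^{jk} ω_j ω_k + a₀ ρ² + r⁻¹ Σ a₁^j ρ ω_j + r⁻² Σ a₂^{jk} ω_j ω_k`. -/
noncomputable def energy {m : ℕ} (hM : (Fin m → ℝ) → Matrix (Fin m) (Fin m) ℝ)
    (a0 : ℝ → (Fin m → ℝ) → ℝ) (a1 : ℝ → (Fin m → ℝ) → Fin m → ℝ)
    (a2 : ℝ → (Fin m → ℝ) → Matrix (Fin m) (Fin m) ℝ) :
    ℝ → (Fin m → ℝ) → ℝ → (Fin m → ℝ) → ℝ :=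
  fun r θ ρ ω =>
    ρ ^ 2 + (∑ j, ∑ k, hM θ j k * ω j * ω k) / r ^ 2 + a0 r θ * ρ ^ 2
      + (∑ j, a1 r θ j * ρ * ω j) / r + (∑ j, ∑ k, a2 r θ j k * ω j * ω k) / r ^ 2

section PhaseDerivs

variable {m : ℕ} (p : ℝ → (Fin m → ℝ) → ℝ → (Fin m → ℝ) → ℝ)

/-- `∂p/∂r`. -/
noncomputable def pdR (r : ℝ) (θ : Fin m → ℝ) (ρ : ℝ) (ω : Fin m → ℝ) : ℝ :=
  deriv (fun s => p s θ ρ ω) r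

/-- `∂p/∂θ_j`. -/
noncomputable def pdTheta (j : Fin m) (r : ℝ) (θ : Fin m → ℝ) (ρ : ℝ) (ω : Fin m → ℝ) : ℝ :=
  fderiv ℝ (fun θ' => p r θ' ρ ω) θ (Pi.single j 1)

/-- `∂p/∂ρ`. -/
noncomputable def pdRho (r : ℝ) (θ : Fin m → ℝ) (ρ : ℝ) (ω : Fin m → ℝ) : ℝ :=
  deriv (fun s => p r θ s ω) ρ

/-- `∂p/∂ω_j`. -/
noncomputable def pdOmega (j : Fin m) (r : ℝ) (θ : Fin m → ℝ) (ρ : ℝ) (ω : Fin m → ℝ) : ℝ :=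
  fderiv ℝ (fun ω' => p r θ ρ ω') ω (Pi.single j 1)

/-- `(r,θ,ρ,ω)` solves the Hamiltonian system
`ṙ = ∂p/∂ρ, θ̇ = ∂p/∂ω, ρ̇ = -∂p/∂r, ω̇ = -∂p/∂θ` on the set `I` of times. -/
def IsHamSolOn (r : ℝ → ℝ) (θ : ℝ → Fin m → ℝ) (ρ : ℝ → ℝ) (ω : ℝ → Fin m → ℝ)
    (I : Set ℝ) : Prop :=
  ∀ t ∈ I,
    HasDerivAt r (pdRho p (r t) (θ t) (ρ t) (ω t)) t ∧
    (∀ j, HasDerivAt (fun s => θ s j) (pdOmega p j (r t) (θ t) (ρ t) (ω t)) t) ∧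
    HasDerivAt ρ (-pdR p (r t) (θ t) (ρ t) (ω t)) t ∧
    (∀ j, HasDerivAt (fun s => ω s j) (-pdTheta p j (r t) (θ t) (ρ t) (ω t)) t)

/-- The interaction-picture (time-dependent) Hamiltonian `K(t,R,θ,ρ,ω) = ρ² - p(R+2tρ,θ,ρ,ω)`. -/
noncomputable def Kint (t R : ℝ) (θ : Fin m → ℝ) (ρ : ℝ) (ω : Fin m → ℝ) : ℝ :=
  ρ ^ 2 - p (R + 2 * t * ρ) θ ρ ω

/-- `∂K/∂R`. -/
noncomputable def KdR (t R : ℝ) (θ : Fin m → ℝ) (ρ : ℝ) (ω : Fin m → ℝ) : ℝ :=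
  deriv (fun x => Kint p t x θ ρ ω) R

/-- `∂K/∂θ_j`. -/
noncomputable def KdTheta (j : Fin m) (t R : ℝ) (θ : Fin m → ℝ) (ρ : ℝ) (ω : Fin m → ℝ) : ℝ :=
  fderiv ℝ (fun θ' => Kint p t R θ' ρ ω) θ (Pi.single j 1)

/-- `∂K/∂ρ`. -/
noncomputable def KdRho (t R : ℝ) (θ : Fin m → ℝ) (ρ : ℝ) (ω : Fin m → ℝ) : ℝ :=
  deriv (fun x => Kint p t R θ x ω) ρ

/-- `∂K/∂ω_j`. -/
noncomputable def KdOmega (j : Fin m) (t R : ℝ) (θ : Fin m → ℝ) (ρ : ℝ) (ω : Fin m → ℝ) : ℝ :=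
  fderiv ℝ (fun ω' => Kint p t R θ ρ ω') ω (Pi.single j 1)

end PhaseDerivs

/-- The phase space `ℝ × ℝ^m × ℝ × ℝ^m` with coordinates `(R, θ, ρ, ω)`. -/
abbrev Phase (m : ℕ) : Type := ℝ × (Fin m → ℝ) × ℝ × (Fin m → ℝ)

/-- A curve `f = (R,θ,ρ,ω)` solves the interaction-picture Hamiltonian system
`Ṙ = ∂K/∂ρ, θ̇ = ∂K/∂ω, ρ̇ = -∂K/∂R, ω̇ = -∂K/∂θ` on the set `I` of times. -/
def IsIntSolOn {m : ℕ} (p : ℝ → (Fin m → ℝ) → ℝ → (Fin m → ℝ) → ℝ)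
    (f : ℝ → Phase m) (I : Set ℝ) : Prop :=
  ∀ t ∈ I,
    HasDerivAt (fun s => (f s).1) (KdRho p t (f t).1 (f t).2.1 (f t).2.2.1 (f t).2.2.2) t ∧
    (∀ j, HasDerivAt (fun s => (f s).2.1 j)
      (KdOmega p j t (f t).1 (f t).2.1 (f t).2.2.1 (f t).2.2.2) t) ∧
    HasDerivAt (fun s => (f s).2.2.1)
      (-(KdR p t (f t).1 (f t).2.1 (f t).2.2.1 (f t).2.2.2)) t ∧
    (∀ j, HasDerivAt (fun s => (f s).2.2.2 j)
      (-(KdTheta p j t (f t).1 (f t).2.1 (f t).2.2.1 (f t).2.2.2)) t)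

/-- The data of a scattering metric of short-range type on the end `(1,∞) × U`:
the boundary metric `h` (smooth, symmetric, positive definite) and the coefficients
`a₀, a₁, a₂` of the kinetic energy, smooth on `(1,∞) × U` with the short-range decay
`|∂_r^k ∂_θ^α a₀| ≤ C r^{-1-μ-k}`, `|∂_r^k ∂_θ^α a₁| ≤ C r^{-μ-k}`,
`|∂_r^k ∂_θ^α a₂| ≤ C r^{-μ-k}` on `(1,∞) × K` for every compact `K ⊆ U`. -/
structure Coeffs (m : ℕ) (μ : ℝ) (U : Set (Fin m → ℝ)) where
  hM : (Fin m → ℝ) → Matrix (Fin m) (Fin m) ℝ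
  a0 : ℝ → (Fin m → ℝ) → ℝ
  a1 : ℝ → (Fin m → ℝ) → Fin m → ℝ
  a2 : ℝ → (Fin m → ℝ) → Matrix (Fin m) (Fin m) ℝ
  hM_smooth : ∀ j k, ContDiffOn ℝ (⊤ : ℕ∞) (fun θ => hM θ j k) U
  hM_symm : ∀ θ ∈ U, (hM θ).IsSymm
  hM_posdef : ∀ θ ∈ U, (hM θ).PosDef
  a0_smooth : ContDiffOn ℝ (⊤ : ℕ∞) (fun z : ℝ × (Fin m → ℝ) => a0 z.1 z.2) (Ioi (1:ℝ) ×ˢ U)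
  a1_smooth : ∀ j, ContDiffOn ℝ (⊤ : ℕ∞) (fun z : ℝ × (Fin m → ℝ) => a1 z.1 z.2 j) (Ioi (1:ℝ) ×ˢ U)
  a2_smooth : ∀ j k, ContDiffOn ℝ (⊤ : ℕ∞) (fun z : ℝ × (Fin m → ℝ) => a2 z.1 z.2 j k) (Ioi (1:ℝ) ×ˢ U)
  a2_symm : ∀ r θ j k, a2 r θ j k = a2 r θ k j
  a0_decay : ∀ K : Set (Fin m → ℝ), IsCompact K → K ⊆ U → DecayOn a0 (1 + μ) 1 K
  a1_decay : ∀ K : Set (Fin m → ℝ), IsCompact K → K ⊆ U →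
    ∀ j, DecayOn (fun r θ => a1 r θ j) μ 1 K
  a2_decay : ∀ K : Set (Fin m → ℝ), IsCompact K → K ⊆ U →
    ∀ j k, DecayOn (fun r θ => a2 r θ j k) μ 1 K

/-- The kinetic energy function associated to the data `c`. -/
noncomputable def Coeffs.p {m : ℕ} {μ : ℝ} {U : Set (Fin m → ℝ)} (c : Coeffs m μ U) :
    ℝ → (Fin m → ℝ) → ℝ → (Fin m → ℝ) → ℝ :=
  energy c.hM c.a0 c.a1 c.a2


/-- The escape function
`φ(t,r,θ,ρ,ω) = χ(|r-r(t)|/(5δ₀|t+T₀|)) χ(|θ-θ(t)|/(δ₀-C|t+T₀|^{-μ}))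
χ(|ρ-ρ(t)|/(δ₀-C|t+T₀|^{-1-μ})) χ(|ω-ω(t)|/(δ₀-C|t+T₀|^{-μ}))` of Lemma 3.5. -/
noncomputable def escapeFn {m : ℕ} (μ : ℝ) (χ : ℝ → ℝ) (δ₀ C T₀ : ℝ)
    (rS : ℝ → ℝ) (θS : ℝ → Fin m → ℝ) (ρS : ℝ → ℝ) (ωS : ℝ → Fin m → ℝ)
    (t r : ℝ) (θ : Fin m → ℝ) (ρ : ℝ) (ω : Fin m → ℝ) : ℝ :=
  χ (|r - rS t| / (5 * δ₀ * |t + T₀|)) *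
    χ (eNorm (θ - θS t) / (δ₀ - C * |t + T₀| ^ (-μ))) *
    χ (|ρ - ρS t| / (δ₀ - C * |t + T₀| ^ (-(1:ℝ) - μ))) *
    χ (eNorm (ω - ωS t) / (δ₀ - C * |t + T₀| ^ (-μ)))


noncomputable def psi (χ : ℝ → ℝ) (q : ℝ) : ℝ := χ (Real.sqrt q)

lemma psi_eventually {χ : ℝ → ℝ} (hχ1 : ∀ τ ≤ (1:ℝ), χ τ = 1) {q : ℝ} (hq : q < 1) :
    psi χ =ᶠ[𝓝 q] fun _ => 1 := by
  filter_upwards [Iio_mem_nhds hq] with x hx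
  exact hχ1 _ (by rw [Real.sqrt_le_left (y := 1) (by norm_num)]; have : x < 1 := hx; norm_num; linarith)

lemma psi_diff {χ : ℝ → ℝ} (hχs : ContDiff ℝ (⊤ : ℕ∞) χ) (hχ1 : ∀ τ ≤ (1:ℝ), χ τ = 1) :
    Differentiable ℝ (psi χ) := by
  intro q
  by_cases hq : q < 1
  · exact (differentiableAt_const 1).congr_of_eventuallyEq (psi_eventually hχ1 hq)
  · have h1 : DifferentiableAt ℝ χ (√q) := (hχs.differentiable (by simp)) _
    exact h1.comp q (Real.hasDerivAt_sqrt (by linarith)).differentiableAt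

lemma psi_deriv_lt {χ : ℝ → ℝ} (hχ1 : ∀ τ ≤ (1:ℝ), χ τ = 1) {q : ℝ} (hq : q < 1) :
    deriv (psi χ) q = 0 := by
  rw [(psi_eventually hχ1 hq).deriv_eq]; simp

lemma psi_ge {χ : ℝ → ℝ} (hχ0 : ∀ τ ≥ (2:ℝ), χ τ = 0) {q : ℝ} (hq : 4 ≤ q) :
    psi χ q = 0 := by
  apply hχ0
  apply Real.le_sqrt_of_sq_le; linarith

lemma psi_deriv_ge {χ : ℝ → ℝ} (hχ0 : ∀ τ ≥ (2:ℝ), χ τ = 0)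
    (hχrange : ∀ τ, χ τ ∈ Icc (0:ℝ) 1) {q : ℝ} (hq : 4 ≤ q) :
    deriv (psi χ) q = 0 := by
  apply IsLocalMin.deriv_eq_zero
  refine Filter.Eventually.of_forall fun x => ?_
  rw [psi_ge hχ0 hq]
  exact (hχrange _).1

lemma psi_deriv_nonpos {χ : ℝ → ℝ} (hχs : ContDiff ℝ (⊤ : ℕ∞) χ)
    (hχ1 : ∀ τ ≤ (1:ℝ), χ τ = 1) (hχmono : ∀ τ ≥ (0:ℝ), deriv χ τ ≤ 0) (q : ℝ) :
    deriv (psi χ) q ≤ 0 := by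
  by_cases hq : q < 1
  · rw [psi_deriv_lt hχ1 hq]
  · have h1 : HasDerivAt χ (deriv χ (√q)) (√q) :=
      ((hχs.differentiable (by simp)) _).hasDerivAt
    have h2 : HasDerivAt (psi χ) _ q := h1.comp q (Real.hasDerivAt_sqrt (by linarith))
    rw [h2.deriv]
    exact mul_nonpos_of_nonpos_of_nonneg (hχmono _ (Real.sqrt_nonneg _)) (by positivity)

lemma eNorm_div_eq {m : ℕ} (χ : ℝ → ℝ) (v : Fin m → ℝ) {g : ℝ} (hg : 0 < g) :
    χ (eNorm v / g) = psi χ ((∑ j, v j ^ 2) / g ^ 2) := by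
  unfold psi eNorm
  rw [Real.sqrt_div (Finset.sum_nonneg fun i _ => sq_nonneg _), Real.sqrt_sq hg.le]

lemma abs_div_eq (χ : ℝ → ℝ) (v : ℝ) {g : ℝ} (hg : 0 < g) :
    χ (|v| / g) = psi χ (v ^ 2 / g ^ 2) := by
  unfold psi
  rw [Real.sqrt_div (sq_nonneg _), Real.sqrt_sq hg.le, Real.sqrt_sq_eq_abs]

/-- time derivative of a vector factor -/
lemma hasDerivAt_vfac {m : ℕ} {χ : ℝ → ℝ} (hd : Differentiable ℝ (psi χ))
    (x : Fin m → ℝ) (xS : ℝ → Fin m → ℝ) (xd : Fin m → ℝ) (g : ℝ → ℝ) (g' t : ℝ)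
    (hx : ∀ j, HasDerivAt (fun s => xS s j) (xd j) t) (hg : HasDerivAt g g' t) (hg0 : 0 < g t) :
    HasDerivAt (fun s => χ (eNorm (x - xS s) / g s))
      (deriv (psi χ) ((∑ j, (x j - xS t j) ^ 2) / g t ^ 2) *
        (-(2 / g t ^ 2) * (∑ j, xd j * (x j - xS t j))
          - 2 * g' / g t ^ 3 * ∑ j, (x j - xS t j) ^ 2)) t := by
  have h1 : HasDerivAt (fun s => ∑ j, (x j - xS s j) ^ 2)
      (∑ j, -2 * (xd j * (x j - xS t j))) t := by
    refine HasDerivAt.fun_sum fun j _ => ?_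
    have := ((hx j).const_sub (x j)).fun_pow 2
    refine this.congr_deriv ?_
    push_cast; ring
  have h2 := h1.fun_div (hg.fun_pow 2) (by positivity)
  have h3 := (hd _).hasDerivAt.comp t h2
  refine (h3.congr_of_eventuallyEq ?_).congr_deriv ?_
  · have : ∀ᶠ s in 𝓝 t, 0 < g s := hg.continuousAt.eventually (lt_mem_nhds hg0)
    filter_upwards [this] with s hs
    rw [eNorm_div_eq χ _ hs]; rfl
  · rw [← Finset.mul_sum]
    congr 1
    field_simp
    push_cast
    ring

lemma hasDerivAt_sfac {χ : ℝ → ℝ} (hd : Differentiable ℝ (psi χ))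
    (x : ℝ) (xS : ℝ → ℝ) (xd : ℝ) (g : ℝ → ℝ) (g' t : ℝ)
    (hx : HasDerivAt xS xd t) (hg : HasDerivAt g g' t) (hg0 : 0 < g t) :
    HasDerivAt (fun s => χ (|x - xS s| / g s))
      (deriv (psi χ) ((x - xS t) ^ 2 / g t ^ 2) *
        (-(2 / g t ^ 2) * (xd * (x - xS t))
          - 2 * g' / g t ^ 3 * (x - xS t) ^ 2)) t := by
  have h1 := (hx.const_sub x).fun_pow 2
  have h2 := h1.fun_div (hg.fun_pow 2) (by positivity)
  have h3 := (hd _).hasDerivAt.comp t h2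
  refine (h3.congr_of_eventuallyEq ?_).congr_deriv ?_
  · have : ∀ᶠ s in 𝓝 t, 0 < g s := hg.continuousAt.eventually (lt_mem_nhds hg0)
    filter_upwards [this] with s hs
    rw [abs_div_eq χ _ hs]; rfl
  · congr 1
    field_simp
    push_cast
    ring

lemma hasDerivAt_sfac' {χ : ℝ → ℝ} (hd : Differentiable ℝ (psi χ))
    (x a g : ℝ) (hg0 : 0 < g) :
    HasDerivAt (fun y => χ (|y - a| / g))
      (deriv (psi χ) ((x - a) ^ 2 / g ^ 2) * (2 / g ^ 2 * (x - a))) x := by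
  have h1 := (((hasDerivAt_id x).sub_const a).fun_pow 2).div_const (g ^ 2)
  have h3 := (hd _).hasDerivAt.comp x h1
  refine (h3.congr_of_eventuallyEq ?_).congr_deriv ?_
  · refine Filter.Eventually.of_forall fun s => ?_
    simp only []
    rw [abs_div_eq χ _ hg0]; rfl
  · simp
    left
    ring

lemma fderiv_vfac {m : ℕ} {χ : ℝ → ℝ} (hd : Differentiable ℝ (psi χ))
    (x a : Fin m → ℝ) (g A B : ℝ) (hg0 : 0 < g) (j : Fin m) :
    fderiv ℝ (fun y => A * χ (eNorm (y - a) / g) * B) x (Pi.single j 1) =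
      A * (deriv (psi χ) ((∑ j, (x j - a j) ^ 2) / g ^ 2) * (2 / g ^ 2 * (x j - a j))) * B := by
  have h1 : HasFDerivAt (fun y : Fin m → ℝ => ∑ j, (y j - a j) ^ 2)
      (∑ j, (2 * (x j - a j)) • ContinuousLinearMap.proj (R := ℝ) (φ := fun _ : Fin m => ℝ) j) x := by
    refine HasFDerivAt.fun_sum fun j _ => ?_
    have := ((hasFDerivAt_apply (𝕜 := ℝ) j x).sub_const (a j)).pow 2
    refine this.congr_fderiv ?_
    simp
  have h3 := (hd _).hasDerivAt.comp_hasFDerivAt x (h1.mul_const ((g ^ 2)⁻¹))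
  have h4 := (h3.const_mul A).mul_const B
  have h5 : (fun y => A * χ (eNorm (y - a) / g) * B) = fun y => A * (psi χ ∘ fun y : Fin m → ℝ => (∑ j, (y j - a j) ^ 2) * (g ^ 2)⁻¹) y * B := by
    funext y
    rw [eNorm_div_eq χ _ hg0]; rfl
  rw [h5, h4.fderiv]
  simp [Pi.single_apply, div_eq_mul_inv]
  ring

lemma abs_sum_le_n {m : ℕ} {f : Fin m → ℝ} {N : ℝ} (h : ∀ j, |f j| ≤ N) :
    |∑ j, f j| ≤ m * N := by
  refine (Finset.abs_sum_le_sum_abs _ _).trans ?_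
  refine (Finset.sum_le_sum fun j _ => h j).trans ?_
  simp

lemma sum1_le {m : ℕ} (hm : 1 ≤ m) {a ω : Fin m → ℝ} {N B u : ℝ} (hB : 1 ≤ B)
    (h : ∀ j, |a j| ≤ N) (hω : ∀ j, |ω j| ≤ B) (hu : |u| ≤ B) :
    |∑ j, a j * u * ω j| ≤ m ^ 2 * B ^ 2 * N := by
  have hN : 0 ≤ N := (abs_nonneg _).trans (h ⟨0, hm⟩)
  have hm' : (1:ℝ) ≤ m := by exact_mod_cast hm
  have h1 : ∀ j, |a j * u * ω j| ≤ N * B * B := fun j => by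
    rw [abs_mul, abs_mul]
    gcongr
    · exact h j
    · exact hω j
  refine (abs_sum_le_n h1).trans ?_
  have : (m:ℝ) ≤ m ^ 2 := by nlinarith
  calc (m:ℝ) * (N * B * B) ≤ m ^ 2 * (N * B * B) := by gcongr
    _ = _ := by ring

lemma sum1_le' {m : ℕ} (hm : 1 ≤ m) {a ω : Fin m → ℝ} {N B : ℝ} (hB : 1 ≤ B)
    (h : ∀ j, |a j| ≤ N) (hω : ∀ j, |ω j| ≤ B) :
    |∑ j, a j * ω j| ≤ m ^ 2 * B ^ 2 * N := by
  have := sum1_le hm hB h hω (u := 1) (by simpa using hB)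
  simpa using this

lemma sum2_le {m : ℕ} {A : Fin m → Fin m → ℝ} {ω v : Fin m → ℝ} {N B : ℝ}
    (h : ∀ j k, |A j k| ≤ N) (hω : ∀ j, |ω j| ≤ B) (hv : ∀ j, |v j| ≤ B) :
    |∑ j, ∑ k, A j k * ω j * v k| ≤ m ^ 2 * B ^ 2 * N := by
  have h1 : ∀ j k, |A j k * ω j * v k| ≤ N * B * B := fun j k => by
    have hN : 0 ≤ N := (abs_nonneg _).trans (h j k)
    have hB : 0 ≤ B := (abs_nonneg _).trans (hω j)
    rw [abs_mul, abs_mul]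
    gcongr
    · exact h j k
    · exact hω j
    · exact hv k
  refine (abs_sum_le_n fun j => abs_sum_le_n fun k => h1 j k).trans (le_of_eq ?_)
  ring

lemma hasFDerivAt_quad {m : ℕ} (A : Fin m → Fin m → ℝ) (ω : Fin m → ℝ) :
    ∃ D : (Fin m → ℝ) →L[ℝ] ℝ, HasFDerivAt (fun w : Fin m → ℝ => ∑ j, ∑ k, A j k * w j * w k) D ω ∧
      ∀ i, D (Pi.single i 1) = (∑ j, ∑ k, A j k * (Pi.single i 1 : Fin m → ℝ) j * ω k)
        + (∑ j, ∑ k, A j k * ω j * (Pi.single i 1 : Fin m → ℝ) k) := by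
  refine ⟨_, HasFDerivAt.fun_sum fun j _ => HasFDerivAt.fun_sum fun k _ =>
    ((hasFDerivAt_apply (𝕜 := ℝ) j ω).const_mul (A j k)).mul (hasFDerivAt_apply (𝕜 := ℝ) k ω), ?_⟩
  intro i
  simp only [_root_.sum_apply, _root_.add_apply,
    _root_.smul_apply, ContinuousLinearMap.proj_apply, smul_eq_mul]
  rw [← Finset.sum_add_distrib]
  refine Finset.sum_congr rfl fun j _ => ?_
  rw [← Finset.sum_add_distrib]
  refine Finset.sum_congr rfl fun k _ => ?_
  ring

lemma slice_diff {m : ℕ} {U : Set (Fin m → ℝ)} (hU : IsOpen U) {f : ℝ → (Fin m → ℝ) → ℝ}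
    (hf : ContDiffOn ℝ (⊤ : ℕ∞) (fun z : ℝ × (Fin m → ℝ) => f z.1 z.2) (Ioi (1:ℝ) ×ˢ U))
    {r : ℝ} (hr : 1 < r) {θ : Fin m → ℝ} (hθ : θ ∈ U) :
    DifferentiableAt ℝ (fun s => f s θ) r ∧ DifferentiableAt ℝ (fun y => f r y) θ := by
  have h : DifferentiableAt ℝ (fun z : ℝ × (Fin m → ℝ) => f z.1 z.2) (r, θ) :=
    (hf.differentiableOn (by simp)).differentiableAt
      ((isOpen_Ioi.prod hU).mem_nhds ⟨hr, hθ⟩)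
  constructor
  · exact h.comp r (f := fun s => (s, θ)) (by fun_prop)
  · exact h.comp θ (f := fun y => (r, y)) (by fun_prop)

lemma decay_ev {m : ℕ} {f : ℝ → (Fin m → ℝ) → ℝ} {ν : ℝ} {K : Set (Fin m → ℝ)}
    (h : DecayOn f ν 1 K) : ∀ᶠ M in atTop, ∀ r > (1:ℝ), ∀ θ ∈ K,
      |f r θ| ≤ M * r ^ (-ν) ∧ |deriv (fun s => f s θ) r| ≤ M * (r ^ (-ν) / r) ∧
      ∀ i, |fderiv ℝ (fun y => f r y) θ (Pi.single i 1)| ≤ M * r ^ (-ν) := by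
  obtain ⟨C1, h1, H1⟩ := h 0 []
  obtain ⟨C2, h2, H2⟩ := h 1 []
  choose C3 h3 H3 using fun i => h 0 [i]
  have h4 : ∀ᶠ M in atTop, ∀ i, C3 i ≤ M := Filter.eventually_all.2 fun i => eventually_ge_atTop _
  filter_upwards [eventually_ge_atTop C1, eventually_ge_atTop C2, h4] with M hM1 hM2 hM3
  intro r hr θ hθ
  have hr0 : 0 < r := by linarith
  have e : r ^ (-ν - 1) = r ^ (-ν) / r := by rw [Real.rpow_sub hr0, Real.rpow_one]
  refine ⟨?_, ?_, fun i => ?_⟩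
  · have := H1 r hr θ hθ
    simp [thetaDerivs] at this
    exact this.trans (by gcongr)
  · have := H2 r hr θ hθ
    simp [thetaDerivs, pderivR] at this
    rw [e] at this
    exact this.trans (by gcongr)
  · have := H3 i r hr θ hθ
    simp [thetaDerivs, pderivTheta] at this
    refine this.trans ?_
    gcongr
    exact hM3 i

lemma hM_ev {m : ℕ} {U : Set (Fin m → ℝ)} (hU : IsOpen U) {f : (Fin m → ℝ) → ℝ}
    (hf : ContDiffOn ℝ (⊤ : ℕ∞) f U) {K : Set (Fin m → ℝ)} (hK : IsCompact K) (hKU : K ⊆ U) :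
    ∀ᶠ M in atTop, ∀ θ ∈ K, |f θ| ≤ M ∧ ∀ i, |fderiv ℝ f θ (Pi.single i 1)| ≤ M := by
  obtain ⟨C1, H1⟩ := hK.exists_bound_of_continuousOn (hf.continuousOn.mono hKU)
  have hc : ContinuousOn (fun θ => fderiv ℝ f θ) U := hf.continuousOn_fderiv_of_isOpen hU (by simp)
  choose C2 H2 using fun i : Fin m => hK.exists_bound_of_continuousOn (f := fun θ => fderiv ℝ f θ (Pi.single i 1))
    ((hc.mono hKU).clm_apply continuousOn_const)
  have h4 : ∀ᶠ M in atTop, ∀ i, C2 i ≤ M := Filter.eventually_all.2 fun i => eventually_ge_atTop _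
  filter_upwards [eventually_ge_atTop C1, h4] with M h1 h2 θ hθ
  exact ⟨(H1 θ hθ).trans h1, fun i => (H2 i θ hθ).trans (h2 i)⟩

lemma coeff_bounds {m : ℕ} {μ : ℝ} {U : Set (Fin m → ℝ)} (hU : IsOpen U) (c : Coeffs m μ U)
    {K : Set (Fin m → ℝ)} (hK : IsCompact K) (hKU : K ⊆ U) :
    ∃ M > (0:ℝ), ∀ r > (1:ℝ), ∀ θ ∈ K,
      (∀ j k, |c.hM θ j k| ≤ M) ∧
      (∀ j k i, |fderiv ℝ (fun y => c.hM y j k) θ (Pi.single i 1)| ≤ M) ∧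
      |c.a0 r θ| ≤ M * (r ^ (-μ) / r) ∧
      |deriv (fun s => c.a0 s θ) r| ≤ M * (r ^ (-μ) / r / r) ∧
      (∀ i, |fderiv ℝ (fun y => c.a0 r y) θ (Pi.single i 1)| ≤ M * (r ^ (-μ) / r)) ∧
      (∀ j, |c.a1 r θ j| ≤ M * r ^ (-μ)) ∧
      (∀ j, |deriv (fun s => c.a1 s θ j) r| ≤ M * (r ^ (-μ) / r)) ∧
      (∀ j i, |fderiv ℝ (fun y => c.a1 r y j) θ (Pi.single i 1)| ≤ M * r ^ (-μ)) ∧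
      (∀ j k, |c.a2 r θ j k| ≤ M * r ^ (-μ)) ∧
      (∀ j k, |deriv (fun s => c.a2 s θ j k) r| ≤ M * (r ^ (-μ) / r)) ∧
      (∀ j k i, |fderiv ℝ (fun y => c.a2 r y j k) θ (Pi.single i 1)| ≤ M * r ^ (-μ)) := by
  have e1 := Filter.eventually_all.2 fun j => Filter.eventually_all.2 fun k =>
    hM_ev hU (c.hM_smooth j k) hK hKU
  have e2 := decay_ev (c.a0_decay K hK hKU)
  have e3 := Filter.eventually_all.2 fun j => decay_ev (c.a1_decay K hK hKU j)
  have e4 := Filter.eventually_all.2 fun j => Filter.eventually_all.2 fun k =>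
    decay_ev (c.a2_decay K hK hKU j k)
  obtain ⟨M, hM, h1, h2, h3, h4⟩ :=
    ((eventually_gt_atTop (0:ℝ)).and (e1.and (e2.and (e3.and e4)))).exists
  refine ⟨M, hM, fun r hr θ hθ => ?_⟩
  have hr0 : 0 < r := by linarith
  have e : r ^ (-(1 + μ)) = r ^ (-μ) / r := by
    rw [show -(1 + μ) = -μ - 1 by ring, Real.rpow_sub hr0, Real.rpow_one]
  obtain ⟨x1, x2, x3⟩ := h2 r hr θ hθ
  rw [e] at x1 x2
  simp only [e] at x3
  exact ⟨fun j k => (h1 j k θ hθ).1, fun j k => (h1 j k θ hθ).2, x1, x2, x3,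
    fun j => (h3 j r hr θ hθ).1, fun j => (h3 j r hr θ hθ).2.1, fun j => (h3 j r hr θ hθ).2.2,
    fun j k => (h4 j k r hr θ hθ).1, fun j k => (h4 j k r hr θ hθ).2.1,
    fun j k => (h4 j k r hr θ hθ).2.2⟩

lemma energy_bounds {m : ℕ} (hm : 1 ≤ m) {μ : ℝ} (hμ : μ ∈ Ioo (0:ℝ) 1)
    {U : Set (Fin m → ℝ)} (hU : IsOpen U) (c : Coeffs m μ U)
    {K : Set (Fin m → ℝ)} (hK : IsCompact K) (hKU : K ⊆ U) {B : ℝ} (hB : 1 ≤ B) :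
    ∃ M > (0:ℝ), ∀ r > (1:ℝ), ∀ θ ∈ K, ∀ (ρ : ℝ) (ω : Fin m → ℝ), |ρ| ≤ B → (∀ j, |ω j| ≤ B) →
      |pdRho c.p r θ ρ ω - 2 * ρ| ≤ M * (r ^ (-μ) / r) ∧
      (∀ j, |pdOmega c.p j r θ ρ ω| ≤ M * (r ^ (-μ) / r)) ∧
      |pdR c.p r θ ρ ω| ≤ M * (r ^ (-μ) / r / r) ∧
      (∀ j, |pdTheta c.p j r θ ρ ω| ≤ M * (r ^ (-μ) / r)) := by
  obtain ⟨M, hM, H⟩ := coeff_bounds hU c hK hKU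
  have hm' : (1:ℝ) ≤ m := by exact_mod_cast hm
  refine ⟨10 * (m ^ 2 * B ^ 2 * M), by positivity, fun r hr θ hθ ρ ω hρ hω => ?_⟩
  obtain ⟨h1, h2, b1, b2, b3, c1, c2, c3, d1, d2, d3⟩ := H r hr θ hθ
  have hr0 : 0 < r := by linarith
  have hx1 : r ^ (-μ) ≤ 1 := Real.rpow_le_one_of_one_le_of_nonpos hr.le (by linarith [hμ.1])
  have hx2 : 1 / r ≤ r ^ (-μ) := by
    rw [one_div, ← Real.rpow_neg_one]
    exact Real.rpow_le_rpow_of_exponent_le hr.le (by linarith [hμ.2])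
  set x := r ^ (-μ) with hx
  have hx0 : 0 < x := by positivity
  set N := m ^ 2 * B ^ 2 * M with hN
  have hN0 : 0 < N := by positivity
  have hn2 : (1:ℝ) ≤ m ^ 2 := one_le_pow₀ hm'
  have hρ2 : ρ ^ 2 ≤ m ^ 2 * B ^ 2 := by
    have : ρ ^ 2 ≤ B ^ 2 := by rw [← sq_abs]; gcongr
    nlinarith [sq_nonneg B]
  have hρ1 : |ρ| ≤ m ^ 2 * B ^ 2 := by
    have : B ≤ B ^ 2 := by nlinarith
    nlinarith [sq_nonneg B]
  have hθU := hKU hθ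
  have hone : ∀ i j, |(Pi.single i 1 : Fin m → ℝ) j| ≤ B := fun i j => by
    by_cases h : j = i
    · subst h; simpa using hB
    · simp [h]; linarith
  -- term bounds
  have T1 : ∀ {y : ℝ}, |y| ≤ N → |y / r ^ 2| ≤ N * (x / r) := fun {y} hy => by
    rw [abs_div, abs_of_pos (by positivity : 0 < r ^ 2), div_le_iff₀ (by positivity)]
    have : 1 ≤ x * r := by rwa [div_le_iff₀ hr0] at hx2
    have e : N * (x / r) * r ^ 2 = N * (x * r) := by field_simp
    rw [e]; nlinarith
  have T2 : ∀ {y : ℝ}, |y| ≤ N * x → |y / r| ≤ N * (x / r) := fun {y} hy => by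
    rw [abs_div, abs_of_pos hr0, div_le_iff₀ hr0]
    have e : N * (x / r) * r = N * x := by field_simp
    rwa [e]
  have T3 : ∀ {y : ℝ}, |y| ≤ N * x → |y / r ^ 2| ≤ N * (x / r) := fun {y} hy => by
    apply T1; nlinarith
  have T4 : ∀ {y : ℝ}, |y| ≤ N * (x / r) → |y / r| ≤ N * (x / r / r) := fun {y} hy => by
    rw [abs_div, abs_of_pos hr0, div_le_iff₀ hr0]
    have e : N * (x / r / r) * r = N * (x / r) := by field_simp
    rwa [e]
  have T5 : ∀ {y : ℝ}, |y| ≤ N * (x / r) → |y / r ^ 2| ≤ N * (x / r / r) := fun {y} hy => by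
    have h := T4 hy
    rw [show y / r ^ 2 = y / r / r by field_simp, abs_div, abs_of_pos hr0]
    exact (div_le_self (abs_nonneg _) hr.le).trans h
  have a0s := slice_diff hU c.a0_smooth hr hθU
  have a1s := fun j => slice_diff (f := fun r θ => c.a1 r θ j) hU (c.a1_smooth j) hr hθU
  have a2s := fun j k => slice_diff (f := fun r θ => c.a2 r θ j k) hU (c.a2_smooth j k) hr hθU
  have hMs : ∀ j k, DifferentiableAt ℝ (fun y => c.hM y j k) θ := fun j k =>
    ((c.hM_smooth j k).differentiableOn (by simp)).differentiableAt (hU.mem_nhds hθU)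
  have D1 : HasDerivAt (fun s => c.p r θ s ω)
      (2 * ρ + c.a0 r θ * (2 * ρ) + (∑ j, c.a1 r θ j * ω j) / r) ρ := by
    have q1 : HasDerivAt (fun s : ℝ => s ^ 2) (2 * ρ) ρ := by simpa using hasDerivAt_pow 2 ρ
    have q2 : HasDerivAt (fun s : ℝ => ∑ j, c.a1 r θ j * s * ω j) (∑ j, c.a1 r θ j * ω j) ρ := by
      refine HasDerivAt.fun_sum fun j _ => ?_
      simpa using ((hasDerivAt_id ρ).const_mul (c.a1 r θ j)).mul_const (ω j)
    have := (((q1.add_const ((∑ j, ∑ k, c.hM θ j k * ω j * ω k) / r ^ 2)).fun_add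
      (q1.const_mul (c.a0 r θ))).fun_add (q2.div_const r)).add_const
        ((∑ j, ∑ k, c.a2 r θ j k * ω j * ω k) / r ^ 2)
    exact this
  have D2 : ∀ i, ∃ y1 y2 y3 y4 y5, pdOmega c.p i r θ ρ ω =
      y1 / r ^ 2 + y2 / r ^ 2 + y3 / r + y4 / r ^ 2 + y5 / r ^ 2 ∧ |y1| ≤ N ∧ |y2| ≤ N ∧ |y3| ≤ N * x
        ∧ |y4| ≤ N * x ∧ |y5| ≤ N * x := by
    intro i
    obtain ⟨E1, hE1, hE1'⟩ := hasFDerivAt_quad (c.hM θ) ω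
    obtain ⟨E2, hE2, hE2'⟩ := hasFDerivAt_quad (c.a2 r θ) ω
    have q2 : HasFDerivAt (fun w : Fin m → ℝ => ∑ j, c.a1 r θ j * ρ * w j)
        (∑ j, (c.a1 r θ j * ρ) • ContinuousLinearMap.proj (R := ℝ) (φ := fun _ : Fin m => ℝ) j) ω := by
      refine HasFDerivAt.fun_sum fun j _ => ?_
      exact (hasFDerivAt_apply (𝕜 := ℝ) j ω).const_mul _
    have := ((((hE1.mul_const (r ^ 2)⁻¹).const_add (ρ ^ 2)).add_const (c.a0 r θ * ρ ^ 2)).fun_add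
      (q2.mul_const r⁻¹)).fun_add (hE2.mul_const (r ^ 2)⁻¹)
    have h : pdOmega c.p i r θ ρ ω = _ := congrArg (fun L => L (Pi.single i 1)) this.fderiv
    refine ⟨_, _, _, _, _, ?_, sum2_le h1 (hone i) hω, sum2_le h1 hω (hone i),
      (sum1_le hm hB c1 (hone i) hρ).trans (le_of_eq (by ring)),
      (sum2_le d1 (hone i) hω).trans (le_of_eq (by ring)), (sum2_le d1 hω (hone i)).trans (le_of_eq (by ring))⟩
    rw [h]
    simp only [_root_.add_apply, _root_.smul_apply, hE1', hE2',
      _root_.sum_apply, ContinuousLinearMap.proj_apply, smul_eq_mul]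
    ring
  have D3 : ∃ y1 y2 y3 y4 y5 y6, pdR c.p r θ ρ ω =
      -(2 * (y1 / r ^ 2 / r)) + y2 + y3 / r - y4 / r / r + y5 / r ^ 2 - 2 * (y6 / r ^ 2 / r)
      ∧ |y1| ≤ N ∧ |y2| ≤ N * (x / r / r) ∧ |y3| ≤ N * (x / r) ∧ |y4| ≤ N * x
        ∧ |y5| ≤ N * (x / r) ∧ |y6| ≤ N * x := by
    have q1 : HasDerivAt (fun s : ℝ => ∑ j, c.a1 s θ j * ρ * ω j)
        (∑ j, deriv (fun s => c.a1 s θ j) r * ρ * ω j) r :=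
      HasDerivAt.fun_sum fun j _ => ((a1s j).1.hasDerivAt.mul_const ρ).mul_const (ω j)
    have q2 : HasDerivAt (fun s : ℝ => ∑ j, ∑ k, c.a2 s θ j k * ω j * ω k)
        (∑ j, ∑ k, deriv (fun s => c.a2 s θ j k) r * ω j * ω k) r :=
      HasDerivAt.fun_sum fun j _ => HasDerivAt.fun_sum fun k _ =>
        ((a2s j k).1.hasDerivAt.mul_const (ω j)).mul_const (ω k)
    have q3 : HasDerivAt (fun s : ℝ => s ^ 2) (2 * r) r := by simpa using hasDerivAt_pow 2 r
    have hr2 : r ^ 2 ≠ 0 := by positivity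
    have := ((((((hasDerivAt_const r (∑ j, ∑ k, c.hM θ j k * ω j * ω k)).fun_div q3 hr2).const_add
      (ρ ^ 2)).fun_add (a0s.1.hasDerivAt.mul_const (ρ ^ 2))).fun_add
        (q1.fun_div (hasDerivAt_id' r) hr0.ne')).fun_add (q2.fun_div q3 hr2))
    have h : pdR c.p r θ ρ ω = _ := this.deriv
    refine ⟨_, deriv (fun s => c.a0 s θ) r * ρ ^ 2, _, _, _, _, ?_, sum2_le h1 hω hω, ?_,
      (sum1_le hm hB c2 hω hρ).trans (le_of_eq (by ring)),
      (sum1_le hm hB c1 hω hρ).trans (le_of_eq (by ring)),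
      (sum2_le d2 hω hω).trans (le_of_eq (by ring)),
      (sum2_le d1 hω hω).trans (le_of_eq (by ring))⟩
    · rw [h]
      field_simp
      ring
    · rw [abs_mul, abs_of_nonneg (sq_nonneg ρ)]
      calc _ ≤ M * (x / r / r) * (m ^ 2 * B ^ 2) := by gcongr
        _ = _ := by rw [hN]; ring
  have D4 : ∀ i, ∃ y1 y2 y3 y4, pdTheta c.p i r θ ρ ω =
      y1 / r ^ 2 + y2 + y3 / r + y4 / r ^ 2 ∧ |y1| ≤ N ∧ |y2| ≤ N * (x / r) ∧ |y3| ≤ N * x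
        ∧ |y4| ≤ N * x := by
    intro i
    have q0 : HasFDerivAt (fun y => ∑ j, ∑ k, c.hM y j k * ω j * ω k)
        (∑ j, ∑ k, (ω k) • (ω j) • fderiv ℝ (fun y => c.hM y j k) θ) θ :=
      HasFDerivAt.fun_sum fun j _ => HasFDerivAt.fun_sum fun k _ =>
        ((hMs j k).hasFDerivAt.mul_const (ω j)).mul_const (ω k)
    have q2 : HasFDerivAt (fun y => ∑ j, ∑ k, c.a2 r y j k * ω j * ω k)
        (∑ j, ∑ k, (ω k) • (ω j) • fderiv ℝ (fun y => c.a2 r y j k) θ) θ :=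
      HasFDerivAt.fun_sum fun j _ => HasFDerivAt.fun_sum fun k _ =>
        ((a2s j k).2.hasFDerivAt.mul_const (ω j)).mul_const (ω k)
    have q1 : HasFDerivAt (fun y => ∑ j, c.a1 r y j * ρ * ω j)
        (∑ j, (ω j) • ρ • fderiv ℝ (fun y => c.a1 r y j) θ) θ :=
      HasFDerivAt.fun_sum fun j _ =>
        ((a1s j).2.hasFDerivAt.mul_const ρ).mul_const (ω j)
    have := ((((q0.mul_const (r ^ 2)⁻¹).const_add (ρ ^ 2)).fun_add
      (a0s.2.hasFDerivAt.mul_const (ρ ^ 2))).fun_add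
      (q1.mul_const r⁻¹)).fun_add (q2.mul_const (r ^ 2)⁻¹)
    have h : pdTheta c.p i r θ ρ ω = _ := congrArg (fun L => L (Pi.single i 1)) this.fderiv
    refine ⟨_, fderiv ℝ (fun y => c.a0 r y) θ (Pi.single i 1) * ρ ^ 2, _, _, ?_,
      sum2_le (fun j k => h2 j k i) hω hω, ?_,
      (sum1_le hm hB (fun j => c3 j i) hω hρ).trans (le_of_eq (by ring)),
      (sum2_le (fun j k => d3 j k i) hω hω).trans (le_of_eq (by ring))⟩
    · rw [h]
      simp only [_root_.add_apply, _root_.smul_apply,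
        _root_.sum_apply, smul_eq_mul]
      have e1 : ∀ a b c : ℝ, a * (b * c) = c * b * a := fun a b c => by ring
      simp only [e1 (ω _)]
      ring
    · rw [abs_mul, abs_of_nonneg (sq_nonneg ρ)]
      calc _ ≤ M * (x / r) * (m ^ 2 * B ^ 2) := by gcongr; exact b3 i
        _ = _ := by rw [hN]; ring
  refine ⟨?_, fun i => ?_, ?_, fun i => ?_⟩
  · have : pdRho c.p r θ ρ ω = _ := D1.deriv
    rw [this]
    have u1 : |c.a0 r θ * ρ| ≤ N * (x / r) := by
      rw [abs_mul]
      calc _ ≤ M * (x / r) * (m ^ 2 * B ^ 2) := by gcongr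
        _ = _ := by rw [hN]; ring
    have u2 := T2 ((sum1_le' hm hB c1 hω).trans (le_of_eq (by ring)))
    rw [abs_le] at *
    constructor <;> linarith [u1.1, u1.2, u2.1, u2.2]
  · obtain ⟨y1, y2, y3, y4, y5, e, w1, w2, w3, w4, w5⟩ := D2 i
    have v1 := abs_le.1 (T1 w1)
    have v2 := abs_le.1 (T1 w2)
    have v3 := abs_le.1 (T2 w3)
    have v4 := abs_le.1 (T3 w4)
    have v5 := abs_le.1 (T3 w5)
    rw [e, abs_le]
    constructor <;> linarith [v1.1, v1.2, v2.1, v2.2, v3.1, v3.2, v4.1, v4.2, v5.1, v5.2]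
  · obtain ⟨y1, y2, y3, y4, y5, y6, e, w1, w2, w3, w4, w5, w6⟩ := D3
    have v1 := abs_le.1 (T4 (T1 w1))
    have v2 := abs_le.1 w2
    have v3 := abs_le.1 (T4 w3)
    have v4 := abs_le.1 (T4 (T2 w4))
    have v5 := abs_le.1 (T5 w5)
    have v6 := abs_le.1 (T4 (T3 w6))
    rw [e, abs_le]
    constructor <;> linarith [v1.1, v1.2, v2.1, v2.2, v3.1, v3.2, v4.1, v4.2, v5.1, v5.2, v6.1, v6.2]
  · obtain ⟨y1, y2, y3, y4, e, w1, w2, w3, w4⟩ := D4 i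
    have v1 := abs_le.1 (T1 w1)
    have v2 := abs_le.1 w2
    have v3 := abs_le.1 (T2 w3)
    have v4 := abs_le.1 (T3 w4)
    rw [e, abs_le]
    have : 0 ≤ N * (x / r) := by positivity
    constructor <;> linarith [v1.1, v1.2, v2.1, v2.2, v3.1, v3.2, v4.1, v4.2]

lemma energy_bounds_s {m : ℕ} (hm : 1 ≤ m) {μ : ℝ} (hμ : μ ∈ Ioo (0:ℝ) 1)
    {U : Set (Fin m → ℝ)} (hU : IsOpen U) (c : Coeffs m μ U)
    {K : Set (Fin m → ℝ)} (hK : IsCompact K) (hKU : K ⊆ U) {B : ℝ} (hB : 1 ≤ B)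
    {κ : ℝ} (hκ : 0 < κ) :
    ∃ M > (0:ℝ), ∀ s > (0:ℝ), ∀ r > (1:ℝ), κ * s ≤ r → ∀ θ ∈ K, ∀ (ρ : ℝ) (ω : Fin m → ℝ),
      |ρ| ≤ B → (∀ j, |ω j| ≤ B) →
      |pdRho c.p r θ ρ ω - 2 * ρ| ≤ M * (s ^ (-μ) / s) ∧
      (∀ j, |pdOmega c.p j r θ ρ ω| ≤ M * (s ^ (-μ) / s)) ∧
      |pdR c.p r θ ρ ω| ≤ M * (s ^ (-μ) / s / s) ∧
      (∀ j, |pdTheta c.p j r θ ρ ω| ≤ M * (s ^ (-μ) / s)) := by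
  obtain ⟨M, hM, H⟩ := energy_bounds hm hμ hU c hK hKU hB
  refine ⟨M * (κ ^ (-μ) / κ + κ ^ (-μ) / κ / κ), by positivity,
    fun s hs r hr hrs θ hθ ρ ω hρ hω => ?_⟩
  obtain ⟨h1, h2, h3, h4⟩ := H r hr θ hθ ρ ω hρ hω
  have hks : 0 < κ * s := by positivity
  have e1 : r ^ (-μ) ≤ κ ^ (-μ) * s ^ (-μ) := by
    rw [← Real.mul_rpow hκ.le hs.le]
    exact Real.rpow_le_rpow_of_nonpos hks hrs (by linarith [hμ.1])
  have hr0 : 0 < r := by linarith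
  have e2 : r ^ (-μ) / r ≤ κ ^ (-μ) / κ * (s ^ (-μ) / s) := by
    calc r ^ (-μ) / r ≤ κ ^ (-μ) * s ^ (-μ) / (κ * s) := by gcongr
      _ = _ := by field_simp
  have e3 : r ^ (-μ) / r / r ≤ κ ^ (-μ) / κ / κ * (s ^ (-μ) / s / s) := by
    calc r ^ (-μ) / r / r ≤ κ ^ (-μ) / κ * (s ^ (-μ) / s) / (κ * s) := by gcongr
      _ = _ := by field_simp
  have p1 : 0 ≤ κ ^ (-μ) / κ := by positivity
  have p2 : 0 ≤ κ ^ (-μ) / κ / κ := by positivity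
  have p3 : 0 ≤ s ^ (-μ) / s := by positivity
  have p4 : 0 ≤ s ^ (-μ) / s / s := by positivity
  have f1 : M * (r ^ (-μ) / r) ≤ M * (κ ^ (-μ) / κ + κ ^ (-μ) / κ / κ) * (s ^ (-μ) / s) := by
    rw [mul_assoc]; gcongr; nlinarith [mul_nonneg p2 p3]
  have f2 : M * (r ^ (-μ) / r / r) ≤ M * (κ ^ (-μ) / κ + κ ^ (-μ) / κ / κ) * (s ^ (-μ) / s / s) := by
    rw [mul_assoc]; gcongr; nlinarith [mul_nonneg p1 p4]
  exact ⟨h1.trans f1, fun j => (h2 j).trans f1, h3.trans f2, fun j => (h4 j).trans f1⟩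

lemma key_v {m : ℕ} {v w : Fin m → ℝ} {g g' W : ℝ} (hg : 0 < g) (hv : 1 ≤ (∑ j, v j ^ 2) / g ^ 2)
    (hw : ∀ j, |w j| ≤ W) (hW : m * W ≤ -g') (hg' : g' ≤ 0) :
    0 ≤ 2 / g ^ 2 * (∑ j, w j * v j) - 2 * g' / g ^ 3 * ∑ j, v j ^ 2 := by
  rw [le_div_iff₀ (by positivity), one_mul] at hv
  set S := ∑ j, v j ^ 2 with hS
  have hS0 : 0 ≤ S := le_trans (sq_nonneg g) hv
  have h1 : (∑ j, w j * v j) ^ 2 ≤ (∑ j, w j ^ 2) * S := Finset.sum_mul_sq_le_sq_mul_sq _ _ _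
  have h2 : (∑ j, w j ^ 2) ≤ g' ^ 2 := by
    rcases Nat.eq_zero_or_pos m with h0 | h0
    · subst h0; simp; positivity
    have hW0 : 0 ≤ W := (abs_nonneg _).trans (hw ⟨0, h0⟩)
    have hm' : (1:ℝ) ≤ m := by exact_mod_cast h0
    have : (∑ j, w j ^ 2) ≤ ∑ j : Fin m, W ^ 2 := Finset.sum_le_sum fun j _ => by
      rw [← sq_abs]; have := hw j; gcongr
    have h3 : (m * W) ^ 2 ≤ (-g') ^ 2 := by gcongr
    simp at this
    have h4 : (m:ℝ) * W ^ 2 ≤ (m * W) ^ 2 := by nlinarith [sq_nonneg W]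
    nlinarith
  set X := ∑ j, w j * v j
  have h3 : (g * X) ^ 2 ≤ (-g' * S) ^ 2 := by
    calc (g * X) ^ 2 = g ^ 2 * X ^ 2 := by ring
      _ ≤ S * (g' ^ 2 * S) := by
          gcongr
          exact h1.trans (by gcongr)
      _ = _ := by ring
  have h4 := abs_le.1 (abs_le_of_sq_le_sq h3 (mul_nonneg (by linarith) hS0))
  have : 2 / g ^ 2 * X - 2 * g' / g ^ 3 * S = 2 / g ^ 3 * (g * X - g' * S) := by
    field_simp
  rw [this]
  have : 0 ≤ g * X - g' * S := by linarith [h4.1]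
  positivity

lemma key_s {v w : ℝ} {g g' : ℝ} (hg : 0 < g) (hv : 1 ≤ v ^ 2 / g ^ 2)
    (hw : |w| ≤ -g') :
    0 ≤ 2 / g ^ 2 * (w * v) - 2 * g' / g ^ 3 * v ^ 2 := by
  have := key_v (m := 1) (v := fun _ => v) (w := fun _ => w) (g' := g') (W := |w|) hg
    (by simpa using hv) (fun _ => le_rfl) (by simpa using hw) (by linarith [abs_nonneg w])
  simpa using this

lemma comp_lt {m : ℕ} {v : Fin m → ℝ} {g : ℝ} (hg : 0 < g) (h : (∑ j, v j ^ 2) / g ^ 2 < 4)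
    (j : Fin m) : |v j| ≤ 2 * g := by
  rw [div_lt_iff₀ (by positivity)] at h
  have : v j ^ 2 ≤ ∑ j, v j ^ 2 :=
    Finset.single_le_sum (f := fun j => v j ^ 2) (fun i _ => sq_nonneg _) (Finset.mem_univ j)
  apply abs_le_of_sq_le_sq _ (by linarith)
  nlinarith

lemma comp_lt_s {v g : ℝ} (hg : 0 < g) (h : v ^ 2 / g ^ 2 < 4) : |v| ≤ 2 * g := by
  rw [div_lt_iff₀ (by positivity)] at h
  apply abs_le_of_sq_le_sq _ (by linarith)
  nlinarith

lemma abs_le_eNorm {m : ℕ} (v : Fin m → ℝ) (j : Fin m) : |v j| ≤ eNorm v := by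
  unfold eNorm
  apply Real.abs_le_sqrt
  exact Finset.single_le_sum (f := fun j => v j ^ 2) (fun i _ => sq_nonneg _) (Finset.mem_univ j)

/-- If inside the support the brackets are nonnegative, the combination is nonpositive. -/
lemma combine {A B D E a b d e Y1 Y2 Y3 Y4 q1 q2 q3 q4 : ℝ}
    (hA : 0 ≤ A) (hB : 0 ≤ B) (hD : 0 ≤ D) (hE : 0 ≤ E)
    (ha : a ≤ 0) (hb : b ≤ 0) (hd : d ≤ 0) (he : e ≤ 0)
    (A4 : 4 ≤ q1 → A = 0 ∧ a = 0) (B4 : 4 ≤ q2 → B = 0 ∧ b = 0)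
    (D4 : 4 ≤ q3 → D = 0 ∧ d = 0) (E4 : 4 ≤ q4 → E = 0 ∧ e = 0)
    (A1 : q1 < 1 → a = 0) (B1 : q2 < 1 → b = 0) (D1 : q3 < 1 → d = 0) (E1 : q4 < 1 → e = 0)
    (H : q1 < 4 → q2 < 4 → q3 < 4 → q4 < 4 →
      (1 ≤ q1 → 0 ≤ Y1) ∧ (1 ≤ q2 → 0 ≤ Y2) ∧ (1 ≤ q3 → 0 ≤ Y3) ∧ (1 ≤ q4 → 0 ≤ Y4)) :
    (B * D * E) * (a * Y1) + (A * D * E) * (b * Y2) + (A * B * E) * (d * Y3)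
      + (A * B * D) * (e * Y4) ≤ 0 := by
  by_cases h1 : 4 ≤ q1
  · simp [A4 h1]
  by_cases h2 : 4 ≤ q2
  · simp [B4 h2]
  by_cases h3 : 4 ≤ q3
  · simp [D4 h3]
  by_cases h4 : 4 ≤ q4
  · simp [E4 h4]
  obtain ⟨k1, k2, k3, k4⟩ := H (not_le.1 h1) (not_le.1 h2) (not_le.1 h3) (not_le.1 h4)
  have aux : ∀ {P a Y q : ℝ}, 0 ≤ P → a ≤ 0 → (q < 1 → a = 0) → (1 ≤ q → 0 ≤ Y) →
      P * (a * Y) ≤ 0 := by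
    intro P a Y q hP ha hq hY
    rcases lt_or_ge q 1 with h | h
    · simp [hq h]
    · exact mul_nonpos_of_nonneg_of_nonpos hP (mul_nonpos_of_nonpos_of_nonneg ha (hY h))
  have z1 := aux (mul_nonneg (mul_nonneg hB hD) hE) ha A1 k1
  have z2 := aux (mul_nonneg (mul_nonneg hA hD) hE) hb B1 k2
  have z3 := aux (mul_nonneg (mul_nonneg hA hB) hE) hd D1 k3
  have z4 := aux (mul_nonneg (mul_nonneg hA hB) hD) he E1 k4
  linarith

set_option maxHeartbeats 4000000 in
/-- Lemma 3.5, parts 1 and 2: monotone escape function. The escape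
function `φ` is well defined, nonnegative, equals `1` along the trajectory, and its
Lagrange derivative `(∂_t + H_p)φ` is nonpositive everywhere. -/
theorem statement_15 {m : ℕ} (hm : 1 ≤ m) {μ : ℝ} (hμ : μ ∈ Ioo (0:ℝ) 1)
    {U : Set (Fin m → ℝ)} (hU : IsOpen U) (c : Coeffs m μ U)
    (χ : ℝ → ℝ) (hχs : ContDiff ℝ (⊤ : ℕ∞) χ)
    (hχ1 : ∀ τ ≤ (1:ℝ), χ τ = 1) (hχ0 : ∀ τ ≥ (2:ℝ), χ τ = 0)
    (hχrange : ∀ τ, χ τ ∈ Icc (0:ℝ) 1) (hχmono : ∀ τ ≥ (0:ℝ), deriv χ τ ≤ 0)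
    (K : Set (Fin m → ℝ)) (hK : IsCompact K) (hKU : K ⊆ U)
    (c₀ C₀ ε₀ : ℝ) (hc₀ : 0 < c₀) (hC₀ : 0 < C₀) (hε₀ : 0 < ε₀) :
    ∃ δ' > (0:ℝ), ∃ C > (0:ℝ), ∀ δ₀ ∈ Ioo (δ'/2) δ', ∃ T₁ < (0:ℝ), ∀ T₀ ≤ T₁,
      ∀ (rS : ℝ → ℝ) (θS : ℝ → Fin m → ℝ) (ρS : ℝ → ℝ) (ωS : ℝ → Fin m → ℝ),
        IsHamSolOn c.p rS θS ρS ωS (Iic 0) →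
        (∀ t ≤ (0:ℝ), rS t ∈ Ioi (1:ℝ) ∧ θS t ∈ K ∧ |ρS t| ≤ C₀ ∧
          eNorm (ωS t) ≤ C₀ ∧ rS t ≥ c₀ * |t + T₀| ∧
          ∀ y, y ∉ U → eNorm (θS t - y) ≥ ε₀) →
        -- (i) well-definedness, nonnegativity, and value 1 along the trajectory
        ((∀ t ≤ (0:ℝ),
          0 < δ₀ - C * |t + T₀| ^ (-μ) ∧
          0 < δ₀ - C * |t + T₀| ^ (-(1:ℝ) - μ) ∧
          (∀ (r : ℝ) (θ : Fin m → ℝ) (ρ : ℝ) (ω : Fin m → ℝ),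
            0 ≤ escapeFn μ χ δ₀ C T₀ rS θS ρS ωS t r θ ρ ω) ∧
          escapeFn μ χ δ₀ C T₀ rS θS ρS ωS t (rS t) (θS t) (ρS t) (ωS t) = 1) ∧
        -- (ii) nonpositivity of the Lagrange derivative
        (∀ t ≤ (0:ℝ), ∀ r ∈ Ioi (1:ℝ), ∀ θ ∈ U, ∀ (ρ : ℝ) (ω : Fin m → ℝ),
          deriv (fun s => escapeFn μ χ δ₀ C T₀ rS θS ρS ωS s r θ ρ ω) t
          + pdRho c.p r θ ρ ω *
              deriv (fun x => escapeFn μ χ δ₀ C T₀ rS θS ρS ωS t x θ ρ ω) r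
          + (∑ j, pdOmega c.p j r θ ρ ω *
              fderiv ℝ (fun y => escapeFn μ χ δ₀ C T₀ rS θS ρS ωS t r y ρ ω) θ
                (Pi.single j 1))
          - pdR c.p r θ ρ ω *
              deriv (fun x => escapeFn μ χ δ₀ C T₀ rS θS ρS ωS t r θ x ω) ρ
          - (∑ j, pdTheta c.p j r θ ρ ω *
              fderiv ℝ (fun y => escapeFn μ χ δ₀ C T₀ rS θS ρS ωS t r θ ρ y) ω
                (Pi.single j 1)) ≤ 0)) := by
  obtain ⟨hμ0, hμ1⟩ := hμ
  obtain ⟨δ₁, hδ₁, hsub⟩ := hK.exists_cthickening_subset_open hU hKU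
  set K' := Metric.cthickening δ₁ K with hK'
  have hK'c : IsCompact K' := hK.cthickening
  set δ' := min (δ₁ / 2) (c₀ / 20) with hδ'
  have hδ'0 : 0 < δ' := by positivity
  have hδ'1 : δ' ≤ δ₁ / 2 := min_le_left _ _
  have hδ'2 : δ' ≤ c₀ / 20 := min_le_right _ _
  have hB1 : 1 ≤ 1 + C₀ + 2 * δ' := by linarith
  obtain ⟨M, hM, HM⟩ := energy_bounds_s hm ⟨hμ0, hμ1⟩ hU c hK'c hsub hB1
    (κ := c₀ / 2) (by positivity)
  have hm' : (1:ℝ) ≤ m := by exact_mod_cast hm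
  have hmpos : (0:ℝ) < m := by linarith
  set C := 2 * m * M / μ with hC
  have hC0 : 0 < C := by positivity
  have hCμ : C * μ = 2 * m * M := by rw [hC]; field_simp
  refine ⟨δ', hδ'0, C, hC0, fun δ₀ hδ₀ => ?_⟩
  have hδ0 : 0 < δ₀ := by linarith [hδ₀.1]
  have hev : ∀ᶠ s : ℝ in atTop, (C + 2 * M) * s ^ (-μ) < δ₀ := by
    have h := (tendsto_rpow_neg_atTop hμ0).const_mul (C + 2 * M)
    rw [mul_zero] at h
    exact h.eventually (gt_mem_nhds hδ0)
  obtain ⟨S, hS⟩ := Filter.eventually_atTop.1 hev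
  refine ⟨-max S 1, by have := le_max_right S 1; linarith, fun T₀ hT₀ rS θS ρS ωS hsol htraj => ?_⟩
  have hS1 := le_max_left S 1
  have hS2 := le_max_right S 1
  have hdiff := psi_diff hχs hχ1
  have hpos : ∀ t ≤ (0:ℝ), 1 ≤ |t + T₀| ∧ (C + 2 * M) * |t + T₀| ^ (-μ) < δ₀ ∧
      |t + T₀| ^ (-(1:ℝ) - μ) = |t + T₀| ^ (-μ) / |t + T₀| ∧ |t + T₀| ^ (-μ) / |t + T₀| ≤ |t + T₀| ^ (-μ) ∧
      0 < |t + T₀| ^ (-μ) / |t + T₀| ∧ t + T₀ < 0 := by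
    intro t ht
    have e : |t + T₀| = -(t + T₀) := abs_of_neg (by linarith)
    have h1 : 1 ≤ |t + T₀| := by rw [e]; linarith
    have h0 : 0 < |t + T₀| := by linarith
    refine ⟨h1, hS _ (by rw [e]; linarith), ?_, ?_, by positivity, by linarith⟩
    · rw [show -(1:ℝ) - μ = -μ - 1 by ring, Real.rpow_sub h0, Real.rpow_one]
    · exact div_le_self (by positivity) h1
  have hgpos : ∀ t ≤ (0:ℝ), 0 < δ₀ - C * |t + T₀| ^ (-μ) ∧
          0 < δ₀ - C * |t + T₀| ^ (-(1:ℝ) - μ) := by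
    intro t ht
    obtain ⟨h1, h2, h3, h4, h5, h6⟩ := hpos t ht
    rw [h3]
    set x := |t + T₀| ^ (-μ)
    set y := x / |t + T₀|
    have : 0 < M * x := mul_pos hM (by linarith)
    have : C * y ≤ C * x := by gcongr
    constructor <;> nlinarith
  refine ⟨fun t ht => ?_, fun t ht r hr θ hθ ρ ω => ?_⟩
  · refine ⟨(hgpos t ht).1, (hgpos t ht).2, fun r θ ρ ω => ?_, ?_⟩
    · unfold escapeFn
      have := fun τ => (hχrange τ).1
      exact mul_nonneg (mul_nonneg (mul_nonneg (this _) (this _)) (this _)) (this _)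
    · simp [escapeFn, eNorm, hχ1]
  · obtain ⟨h1, h2, h3, h4, h5, h6⟩ := hpos t ht
    obtain ⟨hg2, hg3⟩ := hgpos t ht
    obtain ⟨htr1, htr2, htr3, htr4, htr5, -⟩ := htraj t ht
    obtain ⟨hs1, hs2, hs3, hs4⟩ := hsol t ht
    have hs0 : 0 < |t + T₀| := by linarith
    have hg1 : 0 < 5 * δ₀ * |t + T₀| := by positivity
    have dabs : HasDerivAt (fun t => |t + T₀|) (-1) t := by
      simpa using (hasDerivAt_abs_neg h6).comp_add_const t T₀
    have dg1 : HasDerivAt (fun t => 5 * δ₀ * |t + T₀|) (-(5 * δ₀)) t := by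
      simpa using dabs.const_mul (5 * δ₀)
    have dg2 : HasDerivAt (fun t => δ₀ - C * |t + T₀| ^ (-μ))
        (-(C * μ * (|t + T₀| ^ (-μ) / |t + T₀|))) t := by
      refine ((dabs.rpow_const (p := -μ) (Or.inl hs0.ne')).const_mul C).const_sub δ₀ |>.congr_deriv ?_
      rw [Real.rpow_sub hs0, Real.rpow_one]; ring
    have dg3 : HasDerivAt (fun t => δ₀ - C * |t + T₀| ^ (-(1:ℝ) - μ))
        (-(C * (1 + μ) * (|t + T₀| ^ (-μ) / |t + T₀| / |t + T₀|))) t := by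
      refine ((dabs.rpow_const (p := -(1:ℝ) - μ) (Or.inl hs0.ne')).const_mul C).const_sub δ₀ |>.congr_deriv ?_
      rw [Real.rpow_sub hs0, Real.rpow_one, h3]; ring
    have F1 := hasDerivAt_sfac hdiff r rS _ _ _ t hs1 dg1 hg1
    have F2 := hasDerivAt_vfac hdiff θ θS _ _ _ t hs2 dg2 hg2
    have F3 := hasDerivAt_sfac hdiff ρ ρS _ _ _ t hs3 dg3 hg3
    have F4 := hasDerivAt_vfac hdiff ω ωS _ _ _ t hs4 dg2 hg2
    have Ft : deriv (fun s => escapeFn μ χ δ₀ C T₀ rS θS ρS ωS s r θ ρ ω) t = _ :=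
      (((F1.mul F2).mul F3).mul F4).deriv
    have G1 := hasDerivAt_sfac' hdiff r (rS t) _ hg1
    have G3 := hasDerivAt_sfac' hdiff ρ (ρS t) _ hg3
    have Fr : deriv (fun x => escapeFn μ χ δ₀ C T₀ rS θS ρS ωS t x θ ρ ω) r = _ :=
      (((G1.mul_const _).mul_const _).mul_const _).deriv
    have Fρ : deriv (fun x => escapeFn μ χ δ₀ C T₀ rS θS ρS ωS t r θ x ω) ρ = _ :=
      ((G3.const_mul _).mul_const _).deriv
    have Fθ : ∀ j, fderiv ℝ (fun y => escapeFn μ χ δ₀ C T₀ rS θS ρS ωS t r y ρ ω) θ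
                (Pi.single j 1) = _ := fun j => by
      refine Eq.trans ?_ (fderiv_vfac hdiff θ (θS t) _ (χ (|r - rS t| / (5 * δ₀ * |t + T₀|)))
        (χ (|ρ - ρS t| / (δ₀ - C * |t + T₀| ^ (-(1:ℝ) - μ))) *
          χ (eNorm (ω - ωS t) / (δ₀ - C * |t + T₀| ^ (-μ)))) hg2 j)
      congr 2
      funext y
      simp only [escapeFn, mul_assoc]
    have Fω : ∀ j, fderiv ℝ (fun y => escapeFn μ χ δ₀ C T₀ rS θS ρS ωS t r θ ρ y) ω
                (Pi.single j 1) = _ := fun j => by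
      refine Eq.trans ?_ (fderiv_vfac hdiff ω (ωS t) _ (χ (|r - rS t| / (5 * δ₀ * |t + T₀|)) *
        χ (eNorm (θ - θS t) / (δ₀ - C * |t + T₀| ^ (-μ))) *
        χ (|ρ - ρS t| / (δ₀ - C * |t + T₀| ^ (-(1:ℝ) - μ)))) 1 hg2 j)
      congr 2
      funext y
      simp only [escapeFn, mul_one]
    simp only [Fθ, Fω]
    rw [Ft, Fr, Fρ]
    have hnn := fun τ => (hχrange τ).1
    have np := psi_deriv_nonpos hχs hχ1 hχmono
    have key := @combine (χ (|r - rS t| / (5 * δ₀ * |t + T₀|)))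
      (χ (eNorm (θ - θS t) / (δ₀ - C * |t + T₀| ^ (-μ))))
      (χ (|ρ - ρS t| / (δ₀ - C * |t + T₀| ^ (-(1:ℝ) - μ))))
      (χ (eNorm (ω - ωS t) / (δ₀ - C * |t + T₀| ^ (-μ)))) _ _ _ _
      (2 / (5 * δ₀ * |t + T₀|) ^ 2 * ((pdRho c.p r θ ρ ω - pdRho c.p (rS t) (θS t) (ρS t) (ωS t)) * (r - rS t))
        - 2 * (-(5 * δ₀)) / (5 * δ₀ * |t + T₀|) ^ 3 * (r - rS t) ^ 2)
      (2 / (δ₀ - C * |t + T₀| ^ (-μ)) ^ 2 * (∑ j, (pdOmega c.p j r θ ρ ω - pdOmega c.p j (rS t) (θS t) (ρS t) (ωS t)) * (θ j - θS t j))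
        - 2 * (-(C * μ * (|t + T₀| ^ (-μ) / |t + T₀|))) / (δ₀ - C * |t + T₀| ^ (-μ)) ^ 3 * ∑ j, (θ j - θS t j) ^ 2)
      (2 / (δ₀ - C * |t + T₀| ^ (-(1:ℝ) - μ)) ^ 2 * ((-pdR c.p r θ ρ ω - -pdR c.p (rS t) (θS t) (ρS t) (ωS t)) * (ρ - ρS t))
        - 2 * (-(C * (1 + μ) * (|t + T₀| ^ (-μ) / |t + T₀| / |t + T₀|))) / (δ₀ - C * |t + T₀| ^ (-(1:ℝ) - μ)) ^ 3 * (ρ - ρS t) ^ 2)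
      (2 / (δ₀ - C * |t + T₀| ^ (-μ)) ^ 2 * (∑ j, (-pdTheta c.p j r θ ρ ω - -pdTheta c.p j (rS t) (θS t) (ρS t) (ωS t)) * (ω j - ωS t j))
        - 2 * (-(C * μ * (|t + T₀| ^ (-μ) / |t + T₀|))) / (δ₀ - C * |t + T₀| ^ (-μ)) ^ 3 * ∑ j, (ω j - ωS t j) ^ 2)
      _ _ _ _ (hnn _) (hnn _) (hnn _) (hnn _)
      (np ((r - rS t) ^ 2 / (5 * δ₀ * |t + T₀|) ^ 2))
      (np ((∑ j, (θ j - θS t j) ^ 2) / (δ₀ - C * |t + T₀| ^ (-μ)) ^ 2))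
      (np ((ρ - ρS t) ^ 2 / (δ₀ - C * |t + T₀| ^ (-(1:ℝ) - μ)) ^ 2))
      (np ((∑ j, (ω j - ωS t j) ^ 2) / (δ₀ - C * |t + T₀| ^ (-μ)) ^ 2))
      (fun h => ⟨by rw [abs_div_eq χ _ hg1]; exact psi_ge hχ0 h, psi_deriv_ge hχ0 hχrange h⟩)
      (fun h => ⟨by rw [eNorm_div_eq χ _ hg2]; exact psi_ge hχ0 h, psi_deriv_ge hχ0 hχrange h⟩)
      (fun h => ⟨by rw [abs_div_eq χ _ hg3]; exact psi_ge hχ0 h, psi_deriv_ge hχ0 hχrange h⟩)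
      (fun h => ⟨by rw [eNorm_div_eq χ _ hg2]; exact psi_ge hχ0 h, psi_deriv_ge hχ0 hχrange h⟩)
      (fun h => psi_deriv_lt hχ1 h) (fun h => psi_deriv_lt hχ1 h)
      (fun h => psi_deriv_lt hχ1 h) (fun h => psi_deriv_lt hχ1 h) ?_
    · refine le_trans (le_of_eq ?_) key
      clear key np hnn Ft Fr Fρ Fθ Fω G1 G3 F1 F2 F3 F4 dg1 dg2 dg3
      have s1 : ∀ (P v : Fin m → ℝ) (A d k B : ℝ), ∑ j, P j * (A * (d * (k * v j)) * B) =
          A * d * k * B * ∑ j, P j * v j := fun P v A d k B => by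
        rw [Finset.mul_sum]; exact Finset.sum_congr rfl fun j _ => by ring
      have s2 : ∀ (P Q v : Fin m → ℝ), ∑ j, (P j - Q j) * v j = ∑ j, P j * v j - ∑ j, Q j * v j :=
        fun P Q v => by
          rw [← Finset.sum_sub_distrib]; exact Finset.sum_congr rfl fun j _ => by ring
      have s3 : ∀ (P v : Fin m → ℝ), ∑ j, -P j * v j = -∑ j, P j * v j := fun P v => by
        rw [← Finset.sum_neg_distrib]; exact Finset.sum_congr rfl fun j _ => by ring
      rw [s1 (fun j => pdOmega c.p j r θ ρ ω) (fun j => θ j - θS t j),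
        s1 (fun j => pdTheta c.p j r θ ρ ω) (fun j => ω j - ωS t j),
        s2 (fun j => pdOmega c.p j r θ ρ ω) _ (fun j => θ j - θS t j),
        s2 (fun j => -pdTheta c.p j r θ ρ ω) (fun j => -pdTheta c.p j (rS t) (θS t) (ρS t) (ωS t)) (fun j => ω j - ωS t j),
        s3 (fun j => pdTheta c.p j r θ ρ ω) (fun j => ω j - ωS t j),
        s3 (fun j => pdTheta c.p j (rS t) (θS t) (ρS t) (ωS t)) (fun j => ω j - ωS t j)]
      simp only [Pi.mul_apply]
      ring
    · intro q1 q2 q3 q4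
      have r1 := comp_lt_s hg1 q1
      have r2 := comp_lt hg2 q2
      have r3 := comp_lt_s hg3 q3
      have r4 := comp_lt hg2 q4
      have hx0 : 0 < |t + T₀| ^ (-μ) := by linarith
      have g2le : δ₀ - C * |t + T₀| ^ (-μ) ≤ δ₀ := by linarith [mul_pos hC0 hx0]
      have g3le : δ₀ - C * |t + T₀| ^ (-(1:ℝ) - μ) ≤ δ₀ := by
        rw [h3]; linarith [mul_pos hC0 h5]
      have hδlt := hδ₀.2
      have Hz := HM |t + T₀| hs0 r hr
        (by
          have := (abs_le.1 r1).1
          have : 10 * δ₀ * |t + T₀| ≤ c₀ / 2 * |t + T₀| := by gcongr; linarith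
          linarith)
        θ (by
          refine Metric.mem_cthickening_of_dist_le θ (θS t) δ₁ K htr2 ?_
          rw [dist_pi_le_iff hδ₁.le]
          intro j
          rw [Real.dist_eq]
          linarith [r2 j]) ρ ω
        (by
          have := abs_sub_abs_le_abs_sub ρ (ρS t)
          linarith)
        (fun j => by
          have := abs_sub_abs_le_abs_sub (ω j) (ωS t j)
          have := abs_le_eNorm (ωS t) j
          linarith [r4 j])
      have HzS := HM |t + T₀| hs0 (rS t) htr1
        (by
          have : c₀ / 2 * |t + T₀| ≤ c₀ * |t + T₀| := by gcongr; linarith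
          linarith)
        (θS t) (Metric.self_subset_cthickening K htr2) (ρS t) (ωS t)
        (by linarith)
        (fun j => by
          have := abs_le_eNorm (ωS t) j
          linarith)
      obtain ⟨z1, z2, z3, z4⟩ := Hz
      obtain ⟨y1, y2, y3, y4⟩ := HzS
      have hMx : M * (|t + T₀| ^ (-μ) / |t + T₀|) ≤ M * |t + T₀| ^ (-μ) := by gcongr
      have hCx := mul_pos hC0 hx0
      have hyy : 0 < |t + T₀| ^ (-μ) / |t + T₀| / |t + T₀| := by positivity
      refine ⟨fun o => key_s hg1 o ?_, fun o => key_v (W := 2 * M * (|t + T₀| ^ (-μ) / |t + T₀|)) hg2 o (fun j => ?_) ?_ ?_, fun o => key_s hg3 o ?_,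
        fun o => key_v (W := 2 * M * (|t + T₀| ^ (-μ) / |t + T₀|)) hg2 o (fun j => ?_) ?_ ?_⟩
      · have u1 := abs_le.1 z1
        have u2 := abs_le.1 y1
        have u3 := abs_le.1 r3
        rw [abs_le]
        constructor <;> linarith [u1.1, u1.2, u2.1, u2.2, u3.1, u3.2]
      · have u1 := abs_le.1 (z2 j)
        have u2 := abs_le.1 (y2 j)
        rw [abs_le]
        constructor <;> linarith [u1.1, u1.2, u2.1, u2.2]
      · rw [hCμ]; apply le_of_eq; ring
      · rw [hCμ, neg_nonpos]; positivity
      · have u1 := abs_le.1 z3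
        have u2 := abs_le.1 y3
        have : 2 * M * (|t + T₀| ^ (-μ) / |t + T₀| / |t + T₀|) ≤
            C * (1 + μ) * (|t + T₀| ^ (-μ) / |t + T₀| / |t + T₀|) := by
          refine mul_le_mul_of_nonneg_right ?_ hyy.le
          nlinarith [mul_le_mul_of_nonneg_right hm' hM.le]
        rw [neg_neg, abs_le]
        constructor <;> linarith [u1.1, u1.2, u2.1, u2.2]
      · have u1 := abs_le.1 (z4 j)
        have u2 := abs_le.1 (y4 j)
        rw [abs_le]
        constructor <;> linarith [u1.1, u1.2, u2.1, u2.2]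
      · rw [hCμ]; apply le_of_eq; ring
      · rw [hCμ, neg_nonpos]; positivity

end Scattering
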